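/- arXiv:math/0005054 — 3 statements merged into one kernel-verified Lean document; each statement's English description precedes it below -/
import Mathlib

section
/- Let 𝒜 be a collection of subsets of ℝⁿ and V ≥ 0. If for every ε > 0 there exists a translated packing of 𝒜 into some brick of volume V + ε, then there exists a translated packing of 𝒜 into a brick of volume V. -/
open Pointwise

noncomputable section

/-- `ξ` is a translated packing of the family `A` into the set `C`: each translated set
`ξᵢ + Aᵢ` is contained in `C`, and the translated sets have pairwise disjoint interiors. -/
def IsTransPacking {n : ℕ} {ι : Type*} (A : ι → Set (EuclideanSpace ℝ (Fin n)))
    (ξ : ι → EuclideanSpace ℝ (Fin n)) (C : Set (EuclideanSpace ℝ (Fin n))) : Prop :=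
  (∀ i, (fun x => ξ i + x) '' A i ⊆ C) ∧
  Pairwise fun i j =>
    interior ((fun x => ξ i + x) '' A i) ∩ interior ((fun x => ξ j + x) '' A j) = ∅

/-- There exists a translated packing of `A` into `C`. -/
def TransPacksInto {n : ℕ} {ι : Type*} (A : ι → Set (EuclideanSpace ℝ (Fin n)))
    (C : Set (EuclideanSpace ℝ (Fin n))) : Prop :=
  ∃ ξ, IsTransPacking A ξ C

/-- The brick `[a 1, b 1] × ⋯ × [a n, b n]` in `ℝⁿ`. -/
def brick {n : ℕ} (a b : Fin n → ℝ) : Set (EuclideanSpace ℝ (Fin n)) :=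
  {x | ∀ m, x m ∈ Set.Icc (a m) (b m)}

/-!
For a family `A` let `packingVolumes A` be the set of volumes of the bricks into which `A` packs.
The theorem follows once this set is known to be closed, and there are two cases.

If some coordinate is constant on every member of `A`, then the members lie in hyperplanes and have
empty interiors, so only containment matters, and that side of the brick may have any length. Hence
`packingVolumes A` is either contained in `{0}` or equal to `[0, ∞)`.

Otherwise, for each coordinate some member of `A` has positive width, which bounds the corresponding
side of every brick from below. A bound on the volume then bounds all the sides from above. The
translation vectors of the nonempty members are bounded as well, so the pairs of a brick with a
corner at the origin and a packing of them into it form a compact set: containment in a brick is a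
closed condition, and so is the disjointness of translates of open sets.
-/

theorem isClosed_setOfPred_disjoint_vadd {G X : Type*} [AddGroup G] [TopologicalSpace G]
    [ContinuousNeg G] [TopologicalSpace X] [AddAction G X] [ContinuousVAdd G X] {U V : Set X}
    (hU : IsOpen U) (hV : IsOpen V) :
    IsClosed {p : G × G | Disjoint (p.1 +ᵥ U) (p.2 +ᵥ V)} := by
  simp only [Set.disjoint_left, Set.mem_vadd_set_iff_neg_vadd_mem, Set.ofPred_forall]
  refine isClosed_iInter fun x => ?_
  have hUx : IsOpen {p : G × G | -p.1 +ᵥ x ∈ U} := hU.preimage (by fun_prop)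
  have hVx : IsOpen {p : G × G | -p.2 +ᵥ x ∈ V} := hV.preimage (by fun_prop)
  exact isClosed_imp hUx hVx.isClosed_compl

theorem isClosed_of_forall_isClosed_inter_Iic {X : Type*} [LinearOrder X] [NoMaxOrder X]
    [TopologicalSpace X] [ClosedIciTopology X] {s : Set X}
    (h : ∀ x, IsClosed (s ∩ Set.Iic x)) : IsClosed s := by
  refine isClosed_of_closure_subset fun x hx => ?_
  obtain ⟨y, hxy⟩ := exists_gt x
  have hmem : x ∈ closure (s ∩ Set.Iio y) := isOpen_Iio.closure_inter ⟨hx, hxy⟩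
  exact ((h y).closure_subset_iff.2 (Set.inter_subset_inter_right s Set.Iio_subset_Iic_self) hmem).1

theorem interior_eq_empty_of_subsingleton_image {X Y : Type*} [TopologicalSpace X]
    [TopologicalSpace Y] [PerfectSpace Y] {f : X → Y} (hf : IsOpenMap f) {s : Set X}
    (hs : (f '' s).Subsingleton) : interior s = ∅ := by
  by_contra! ⟨x, hx⟩
  have hfx : f '' interior s = {f x} :=
    (hs.anti (Set.image_mono interior_subset)).eq_singleton_of_mem ⟨x, hx, rfl⟩
  exact not_isOpen_singleton (f x) (hfx ▸ hf _ isOpen_interior)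

theorem le_div_prod_erase_of_prod_le {κ K : Type*} [DecidableEq κ] [Semifield K] [LinearOrder K]
    [IsStrictOrderedRing K] {t : Finset κ} {δ s : κ → K} {W : K} (hδ : ∀ k ∈ t, 0 < δ k)
    (hs : ∀ k ∈ t, δ k ≤ s k) (hW : ∏ k ∈ t, s k ≤ W) {m : κ} (hm : m ∈ t) :
    s m ≤ W / ∏ k ∈ t.erase m, δ k := by
  have hδ' : ∀ k ∈ t.erase m, 0 < δ k := fun k hk => hδ k (Finset.mem_of_mem_erase hk)
  rw [le_div_iff₀ (Finset.prod_pos hδ')]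
  calc s m * ∏ k ∈ t.erase m, δ k
      ≤ s m * ∏ k ∈ t.erase m, s k :=
        mul_le_mul_of_nonneg_left
          (Finset.prod_le_prod (fun k hk => (hδ' k hk).le)
            fun k hk => hs k (Finset.mem_of_mem_erase hk))
          ((hδ m hm).le.trans (hs m hm))
    _ = ∏ k ∈ t, s k := Finset.mul_prod_erase t s hm
    _ ≤ W := hW

section Brick

variable {n : ℕ}

theorem brick_mono_right {a b c : Fin n → ℝ} (hbc : b ≤ c) : brick a b ⊆ brick a c :=
  fun _ hx m => ⟨(hx m).1, (hx m).2.trans (hbc m)⟩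

theorem isCompact_brick (a b : Fin n → ℝ) : IsCompact (brick a b) := by
  have h : brick a b = PiLp.homeomorph 2 (fun _ : Fin n => ℝ) ⁻¹' Set.Icc a b := by
    ext x
    exact forall_and
  rw [h, Homeomorph.isCompact_preimage]
  exact isCompact_Icc

theorem vadd_brick (v : EuclideanSpace ℝ (Fin n)) (a b : Fin n → ℝ) :
    v +ᵥ brick a b = brick (v.ofLp + a) (v.ofLp + b) := by
  ext x
  simp [Set.mem_vadd_set_iff_neg_vadd_mem, brick, le_neg_add_iff_add_le, neg_add_le_iff_le_add]

theorem isClosed_setOfPred_mem_brick :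
    IsClosed {p : ((Fin n → ℝ) × (Fin n → ℝ)) × EuclideanSpace ℝ (Fin n) |
      p.2 ∈ brick p.1.1 p.1.2} := by
  change IsClosed {p : ((Fin n → ℝ) × (Fin n → ℝ)) × EuclideanSpace ℝ (Fin n) |
    ∀ m, p.1.1 m ≤ p.2 m ∧ p.2 m ≤ p.1.2 m}
  simp only [Set.ofPred_forall, Set.ofPred_and]
  exact isClosed_iInter fun m =>
    (isClosed_le (by fun_prop) (by fun_prop)).inter (isClosed_le (by fun_prop) (by fun_prop))

theorem exists_vadd_subset_brick_update {B : Set (EuclideanSpace ℝ (Fin n))} {m : Fin n}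
    (hB : ((fun x => x m) '' B).Subsingleton) {v : EuclideanSpace ℝ (Fin n)} {a b : Fin n → ℝ}
    (hv : v +ᵥ B ⊆ brick a b) {t : ℝ} (ht : a m ≤ t) :
    ∃ w : EuclideanSpace ℝ (Fin n), w +ᵥ B ⊆ brick a (Function.update b m t) := by
  obtain rfl | ⟨x₀, hx₀⟩ := B.eq_empty_or_nonempty
  · exact ⟨0, by simp⟩
  refine ⟨WithLp.toLp 2 (Function.update v m (a m - x₀ m)), ?_⟩
  rintro _ ⟨x, hx, rfl⟩ k
  obtain rfl | hk := eq_or_ne k m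
  · have hxk : x k = x₀ k := hB ⟨x, hx, rfl⟩ ⟨x₀, hx₀, rfl⟩
    simpa [hxk] using ht
  · simpa [hk] using hv ⟨x, hx, rfl⟩ k

end Brick

section Packing

variable {n : ℕ} {ι : Type*} {A : ι → Set (EuclideanSpace ℝ (Fin n))}
  {ξ : ι → EuclideanSpace ℝ (Fin n)} {C : Set (EuclideanSpace ℝ (Fin n))}

theorem isTransPacking_iff :
    IsTransPacking A ξ C ↔ (∀ i, ξ i +ᵥ A i ⊆ C) ∧
      Pairwise fun i j => Disjoint (ξ i +ᵥ interior (A i)) (ξ j +ᵥ interior (A j)) := by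
  simp only [IsTransPacking, ← interior_vadd, Set.disjoint_iff_inter_eq_empty]
  rfl

theorem IsTransPacking.vadd (h : IsTransPacking A ξ C) (v : EuclideanSpace ℝ (Fin n)) :
    IsTransPacking A (v +ᵥ ξ) (v +ᵥ C) := by
  rw [isTransPacking_iff] at h ⊢
  simp only [Pi.vadd_apply, vadd_assoc, Set.disjoint_vadd_set]
  exact ⟨fun i => Set.vadd_set_mono (h.1 i), h.2⟩

theorem TransPacksInto.brick_zero_sub {a b : Fin n → ℝ} (h : TransPacksInto A (brick a b)) :
    TransPacksInto A (brick 0 (b - a)) := by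
  obtain ⟨ξ, hξ⟩ := h
  have hbrick : (-WithLp.toLp 2 a : EuclideanSpace ℝ (Fin n)) +ᵥ brick a b = brick 0 (b - a) := by
    simp [vadd_brick, neg_add_eq_sub]
  exact ⟨_, hbrick ▸ hξ.vadd _⟩

theorem transPacksInto_iff_nonempty :
    TransPacksInto A C ↔ TransPacksInto (fun i : {i // (A i).Nonempty} => A i) C := by
  classical
  constructor
  · rintro ⟨ξ, hsub, hdisj⟩
    exact ⟨fun i => ξ i, fun i => hsub i, fun i j hij => hdisj (Subtype.coe_ne_coe.2 hij)⟩
  · rintro ⟨ξ, hξ⟩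
    rw [isTransPacking_iff] at hξ
    refine ⟨fun i => if h : (A i).Nonempty then ξ ⟨i, h⟩ else 0, isTransPacking_iff.2 ⟨?_, ?_⟩⟩
    · intro i
      obtain h | h := (A i).eq_empty_or_nonempty
      · simp [h]
      · simpa [h] using hξ.1 ⟨i, h⟩
    · intro i j hij
      obtain hi | hi := (A i).eq_empty_or_nonempty
      · simp [hi]
      obtain hj | hj := (A j).eq_empty_or_nonempty
      · simp [hj]
      simpa [hi, hj] using hξ.2 (i := ⟨i, hi⟩) (j := ⟨j, hj⟩) (by simpa using hij)

theorem transPacksInto_of_interior_eq_empty (hA : ∀ i, interior (A i) = ∅)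
    (h : ∀ i, ∃ v : EuclideanSpace ℝ (Fin n), v +ᵥ A i ⊆ C) : TransPacksInto A C := by
  choose ξ hξ using h
  exact ⟨ξ, isTransPacking_iff.2 ⟨hξ, fun i j _ => by simp [hA]⟩⟩

theorem TransPacksInto.brick_update {m : Fin n}
    (hA : ∀ i, ((fun x => x m) '' A i).Subsingleton) {a b : Fin n → ℝ}
    (h : TransPacksInto A (brick a b)) {t : ℝ} (ht : a m ≤ t) :
    TransPacksInto A (brick a (Function.update b m t)) := by
  obtain ⟨ξ, hξ⟩ := h
  exact transPacksInto_of_interior_eq_empty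
    (fun i => interior_eq_empty_of_subsingleton_image (PiLp.isOpenMap_apply 2 _ m) (hA i))
    fun i => exists_vadd_subset_brick_update (hA i) ((isTransPacking_iff.1 hξ).1 i) ht

theorem TransPacksInto.sub_le_side {a b : Fin n → ℝ} (h : TransPacksInto A (brick a b)) {i : ι}
    {x y : EuclideanSpace ℝ (Fin n)} (hx : x ∈ A i) (hy : y ∈ A i) (m : Fin n) :
    x m - y m ≤ b m - a m := by
  obtain ⟨ξ, hξ⟩ := h
  have hxm : ξ i m + x m ≤ b m := (hξ.1 i ⟨x, hx, rfl⟩ m).2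
  have hym : a m ≤ ξ i m + y m := (hξ.1 i ⟨y, hy, rfl⟩ m).1
  linarith

theorem exists_pos_forall_le_side {m : Fin n}
    (hA : ∃ i, ((fun x => x m) '' A i).Nontrivial) :
    ∃ δ > 0, ∀ a b : Fin n → ℝ, TransPacksInto A (brick a b) → δ ≤ b m - a m := by
  obtain ⟨i, hi⟩ := hA
  obtain ⟨_, ⟨x, hx, rfl⟩, _, ⟨y, hy, rfl⟩, hlt⟩ := hi.exists_lt
  exact ⟨y m - x m, sub_pos.2 hlt, fun a b h => h.sub_le_side hy hx m⟩

variable (A)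

theorem isClosed_setOfPred_isTransPacking_brick :
    IsClosed {p : ((Fin n → ℝ) × (Fin n → ℝ)) × (ι → EuclideanSpace ℝ (Fin n)) |
      IsTransPacking A p.2 (brick p.1.1 p.1.2)} := by
  simp only [isTransPacking_iff, Set.vadd_set_subset_iff, Pairwise, Set.ofPred_and,
    Set.ofPred_forall]
  refine IsClosed.inter ?_ ?_
  · refine isClosed_iInter fun i => isClosed_iInter fun x => isClosed_iInter fun _ => ?_
    exact isClosed_setOfPred_mem_brick.preimage
      (f := fun p : ((Fin n → ℝ) × (Fin n → ℝ)) × (ι → EuclideanSpace ℝ (Fin n)) =>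
        (p.1, p.2 i +ᵥ x)) (by fun_prop)
  · refine isClosed_iInter fun i => isClosed_iInter fun j => isClosed_iInter fun _ => ?_
    exact (isClosed_setOfPred_disjoint_vadd isOpen_interior isOpen_interior).preimage
      (f := fun p : ((Fin n → ℝ) × (Fin n → ℝ)) × (ι → EuclideanSpace ℝ (Fin n)) =>
        (p.2 i, p.2 j)) (by fun_prop)

variable {A} in
theorem isCompact_setOfPred_transPacksInto_brick_of_nonempty (hA : ∀ i, (A i).Nonempty)
    (a c : Fin n → ℝ) : IsCompact {b | b ∈ Set.Icc a c ∧ TransPacksInto A (brick a b)} := by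
  choose x hx using hA
  let P : Set ((Fin n → ℝ) × (ι → EuclideanSpace ℝ (Fin n))) :=
    {p | IsTransPacking A p.2 (brick a p.1)}
  let K : Set (ι → EuclideanSpace ℝ (Fin n)) := Set.univ.pi fun i => -x i +ᵥ brick a c
  have hP : IsClosed P :=
    (isClosed_setOfPred_isTransPacking_brick A).preimage
      (f := fun p : (Fin n → ℝ) × (ι → EuclideanSpace ℝ (Fin n)) => ((a, p.1), p.2))
      (by fun_prop)
  have hK : IsCompact K := isCompact_univ_pi fun i => (isCompact_brick a c).vadd (-x i)
  have hmemK : ∀ b ≤ c, ∀ ξ, (b, ξ) ∈ P → ξ ∈ K := fun b hb ξ hξ i _ => by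
    have hmem : ξ i + x i ∈ brick a c := brick_mono_right hb (hξ.1 i ⟨x i, hx i, rfl⟩)
    simpa [Set.mem_vadd_set_iff_neg_vadd_mem, add_comm] using hmem
  have himage : {b | b ∈ Set.Icc a c ∧ TransPacksInto A (brick a b)} =
      Prod.fst '' ((Set.Icc a c ×ˢ K) ∩ P) := by
    ext b
    constructor
    · rintro ⟨hb, ξ, hξ⟩
      exact ⟨(b, ξ), ⟨⟨hb, hmemK b hb.2 ξ hξ⟩, hξ⟩, rfl⟩
    · rintro ⟨⟨b, ξ⟩, ⟨⟨hb, -⟩, hξ⟩, rfl⟩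
      exact ⟨hb, ξ, hξ⟩
  rw [himage]
  exact ((isCompact_Icc.prod hK).inter_right hP).image continuous_fst

theorem isCompact_setOfPred_transPacksInto_brick (a c : Fin n → ℝ) :
    IsCompact {b | b ∈ Set.Icc a c ∧ TransPacksInto A (brick a b)} := by
  -- The translation vector of an empty set is unbounded, so empty sets are discarded.
  simp only [transPacksInto_iff_nonempty (A := A)]
  exact isCompact_setOfPred_transPacksInto_brick_of_nonempty (fun i => i.2) a c

/-- The set of volumes of the bricks into which the family `A` has a translated packing. Attaining
the limit volume amounts to this set being closed. The condition `a m ≤ b m` keeps the product of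
the sides from counting pairs of reversed endpoints. -/
def packingVolumes : Set ℝ :=
  {v | ∃ a b : Fin n → ℝ, (∀ m, a m ≤ b m) ∧ ∏ m, (b m - a m) = v ∧ TransPacksInto A (brick a b)}

theorem packingVolumes_eq_image :
    packingVolumes A =
      (fun s => ∏ m, s m) '' {s : Fin n → ℝ | 0 ≤ s ∧ TransPacksInto A (brick 0 s)} := by
  ext v
  constructor
  · rintro ⟨a, b, hab, rfl, h⟩
    exact ⟨b - a, ⟨sub_nonneg.2 hab, h.brick_zero_sub⟩, rfl⟩
  · rintro ⟨s, ⟨hs, h⟩, rfl⟩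
    exact ⟨0, s, hs, by simp, h⟩

theorem packingVolumes_subset_Ici : packingVolumes A ⊆ Set.Ici 0 := by
  rintro _ ⟨a, b, hab, rfl, -⟩
  exact Finset.prod_nonneg fun m _ => sub_nonneg.2 (hab m)

variable {A}

theorem packingVolumes_eq_Ici {m : Fin n} (hA : ∀ i, ((fun x => x m) '' A i).Subsingleton) {v : ℝ}
    (hv : v ∈ packingVolumes A) (hv₀ : v ≠ 0) : packingVolumes A = Set.Ici 0 := by
  refine (packingVolumes_subset_Ici A).antisymm fun w (hw : 0 ≤ w) => ?_
  rw [packingVolumes_eq_image] at hv ⊢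
  obtain ⟨s, ⟨hs, hp⟩, rfl⟩ := hv
  let r := ∏ k ∈ Finset.univ \ {m}, s k
  have hr : r ≠ 0 := Finset.prod_ne_zero_iff.2 fun k _ =>
    Finset.prod_ne_zero_iff.1 hv₀ k (Finset.mem_univ k)
  have ht : 0 ≤ w / r := div_nonneg hw (Finset.prod_nonneg fun k _ => hs k)
  refine ⟨Function.update s m (w / r), ⟨?_, hp.brick_update hA ht⟩, ?_⟩
  · exact le_update_iff.2 ⟨ht, fun k _ => hs k⟩
  · calc ∏ k, Function.update s m (w / r) k
        = w / r * r := Finset.prod_update_of_mem (Finset.mem_univ m) s (w / r)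
      _ = w := div_mul_cancel₀ w hr

theorem isCompact_packingVolumes_inter_Iic
    (hA : ∀ m, ∃ i, ((fun x => x m) '' A i).Nontrivial) (W : ℝ) :
    IsCompact (packingVolumes A ∩ Set.Iic W) := by
  choose δ hδ hside using fun m => exists_pos_forall_le_side (hA m)
  let M : Fin n → ℝ := fun m => W / ∏ k ∈ Finset.univ.erase m, δ k
  have hM : ∀ s, TransPacksInto A (brick 0 s) → ∏ m, s m ≤ W → s ≤ M := fun s hs hW m =>
    le_div_prod_erase_of_prod_le (fun k _ => hδ k)
      (fun k _ => by simpa using hside k 0 s hs) hW (Finset.mem_univ m)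
  have hprod : Continuous fun s : Fin n → ℝ => ∏ m, s m := by fun_prop
  have himage : packingVolumes A ∩ Set.Iic W = (fun s => ∏ m, s m) ''
      ({s | s ∈ Set.Icc 0 M ∧ TransPacksInto A (brick 0 s)} ∩ {s | ∏ m, s m ≤ W}) := by
    rw [packingVolumes_eq_image]
    ext v
    constructor
    · rintro ⟨⟨s, ⟨hs, hp⟩, rfl⟩, hW⟩
      exact ⟨s, ⟨⟨⟨hs, hM s hp hW⟩, hp⟩, hW⟩, rfl⟩
    · rintro ⟨s, ⟨⟨hs, hp⟩, hW⟩, rfl⟩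
      exact ⟨⟨s, ⟨hs.1, hp⟩, rfl⟩, hW⟩
  rw [himage]
  exact ((isCompact_setOfPred_transPacksInto_brick A 0 M).inter_right
    (isClosed_le hprod continuous_const)).image hprod

variable (A)

theorem isClosed_packingVolumes : IsClosed (packingVolumes A) := by
  by_cases hA : ∃ m, ∀ i, ((fun x => x m) '' A i).Subsingleton
  · obtain ⟨m, hm⟩ := hA
    by_cases hzero : ∀ v ∈ packingVolumes A, v = 0
    · exact ((Set.finite_singleton 0).subset hzero).isClosed
    · push Not at hzero
      obtain ⟨v, hv, hv₀⟩ := hzero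
      rw [packingVolumes_eq_Ici hm hv hv₀]
      exact isClosed_Ici
  · push Not at hA
    exact isClosed_of_forall_isClosed_inter_Iic fun W =>
      (isCompact_packingVolumes_inter_Iic hA W).isClosed

end Packing

/-- **Theorem 2, translated-packing version.** If for every `ε > 0` there exists a
translated packing of `A` into some brick of volume `V + ε`, then there exists a
translated packing of `A` into a brick of volume `V`. -/
theorem translated_packing_of_bricks {n : ℕ} {ι : Type*}
    (A : ι → Set (EuclideanSpace ℝ (Fin n)))
    (V : ℝ) (hV : 0 ≤ V)
    (h : ∀ ε : ℝ, 0 < ε → ∃ a b : Fin n → ℝ, (∀ m, a m ≤ b m) ∧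
      (∏ m, (b m - a m)) = V + ε ∧ TransPacksInto A (brick a b)) :
    ∃ a b : Fin n → ℝ, (∀ m, a m ≤ b m) ∧
      (∏ m, (b m - a m)) = V ∧ TransPacksInto A (brick a b) := by
  have hIoi : Set.Ioi V ⊆ packingVolumes A := fun v hv =>
    add_sub_cancel V v ▸ h (v - V) (sub_pos.2 hv)
  have hIci : Set.Ici V ⊆ packingVolumes A := by
    rw [← closure_Ioi]
    exact closure_minimal hIoi (isClosed_packingVolumes A)
  exact hIci Set.self_mem_Ici
end
end

section
/- Let 𝒜 = {A_1, A_2, …} be the collection of closed rectangles in ℝ² where A_i has dimensions (1/i) × (1/(i+1)) for i ≥ 1. Suppose that for every ε > 0 the collection 𝒜 can be packed into a square of area 1 + ε. Then there exists a packing of 𝒜 into a square of area 1 such that the complement, within that square, of the union of the packed rectangles has Lebesgue measure zero (i.e., 𝒜 tiles a square of area 1). -/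
/-!
The packings of a family of nonempty sets into a compact set `C` form a compact subset of the space
of all families of rigid motions: a motion carrying a given point into `C` ranges over a compact
set, and disjointness of interiors is a closed condition because the interiors themselves are open.
By Cantor's intersection theorem a family which packs into every square of side `s > 1` therefore
packs into the unit square. Rigid motions preserve area and the boundary of a rectangle is null, so
the rectangles cover an area of `∑ 1 / ((i + 1) (i + 2)) = 1`, which is that of the whole square.
-/

open Pointwise

noncomputable section

/-- The rigid motion `(θ, ξ)` acting on a point of `ℝⁿ`: `x ↦ ξ + θx`. -/
def rmApply {n : ℕ} (θ : Matrix (Fin n) (Fin n) ℝ) (ξ : EuclideanSpace ℝ (Fin n))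
    (x : EuclideanSpace ℝ (Fin n)) : EuclideanSpace ℝ (Fin n) :=
  ξ + (EuclideanSpace.equiv (Fin n) ℝ).symm (θ.mulVec (EuclideanSpace.equiv (Fin n) ℝ x))

/-- `(θ, ξ)` is a packing of the family `A` into the set `C`: each `θ i` is orthogonal,
each repositioned set `σᵢ(Aᵢ)` is contained in `C`, and the repositioned sets have
pairwise disjoint interiors. -/
def IsPacking {n : ℕ} {ι : Type*} (A : ι → Set (EuclideanSpace ℝ (Fin n)))
    (θ : ι → Matrix (Fin n) (Fin n) ℝ) (ξ : ι → EuclideanSpace ℝ (Fin n))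
    (C : Set (EuclideanSpace ℝ (Fin n))) : Prop :=
  (∀ i, θ i ∈ Matrix.orthogonalGroup (Fin n) ℝ) ∧
  (∀ i, rmApply (θ i) (ξ i) '' A i ⊆ C) ∧
  Pairwise fun i j =>
    interior (rmApply (θ i) (ξ i) '' A i) ∩ interior (rmApply (θ j) (ξ j) '' A j) = ∅

/-- There exists a packing of `A` into `C`. -/
def PacksInto {n : ℕ} {ι : Type*} (A : ι → Set (EuclideanSpace ℝ (Fin n)))
    (C : Set (EuclideanSpace ℝ (Fin n))) : Prop :=
  ∃ θ ξ, IsPacking A θ ξ C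

/-- The closed axis-aligned rectangle `[0, w] × [0, h]` in `ℝ²`. -/
def rect (w h : ℝ) : Set (EuclideanSpace ℝ (Fin 2)) :=
  {x | x 0 ∈ Set.Icc 0 w ∧ x 1 ∈ Set.Icc 0 h}

/-- The collection of rectangles of dimensions `1 × (1/2)`, `(1/2) × (1/3)`,
`(1/3) × (1/4)`, …: the `i`-th set (for `i : ℕ`) has dimensions `(1/(i+1)) × (1/(i+2))`. -/
def moserRects : ℕ → Set (EuclideanSpace ℝ (Fin 2)) :=
  fun i => rect (1 / ((i : ℝ) + 1)) (1 / ((i : ℝ) + 2))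

open Filter MeasureTheory Set Topology

/-- A rigid motion of `ℝⁿ`, encoded by its orthogonal part and its translation part, so that sets of
motions carry the product topology. -/
abbrev RigidMotion (n : ℕ) : Type :=
  Matrix.orthogonalGroup (Fin n) ℝ × EuclideanSpace ℝ (Fin n)

instance compactSpace_unitaryGroup {𝕜 m : Type*} [RCLike 𝕜] [Fintype m] [DecidableEq m] :
    CompactSpace (Matrix.unitaryGroup m 𝕜) := by
  have hbox : IsCompact (univ.pi fun _ : m => univ.pi fun _ : m => Metric.closedBall (0 : 𝕜) 1) :=
    isCompact_univ_pi fun _ => isCompact_univ_pi fun _ => isCompact_closedBall 0 1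
  exact isCompact_iff_compactSpace.1 <| hbox.of_isClosed_subset
    (isClosed_unitary (R := Matrix m m 𝕜)) fun U hU i _ j _ =>
      mem_closedBall_zero_iff.2 (entry_norm_bound_of_unitary hU i j)

namespace RigidMotion

variable {n : ℕ}

/-- The map `x ↦ ξ + θx` of a rigid motion, as an isometric bijection of `ℝⁿ`. -/
def toIsometryEquiv (g : RigidMotion n) :
    EuclideanSpace ℝ (Fin n) ≃ᵢ EuclideanSpace ℝ (Fin n) :=
  (Unitary.linearIsometryEquiv
    (Unitary.map (.ofClass (Matrix.toEuclideanCLM (𝕜 := ℝ))) g.1)).toIsometryEquiv.trans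
    (IsometryEquiv.addLeft g.2)

lemma toIsometryEquiv_apply (g : RigidMotion n) (x : EuclideanSpace ℝ (Fin n)) :
    g.toIsometryEquiv x = g.2 + WithLp.toLp 2 ((g.1 : Matrix _ _ ℝ).mulVec x) := rfl

lemma continuous_apply (x : EuclideanSpace ℝ (Fin n)) :
    Continuous fun g : RigidMotion n => g.toIsometryEquiv x := by
  simp only [toIsometryEquiv_apply]
  fun_prop

lemma continuous_symm_apply :
    Continuous fun p : RigidMotion n × EuclideanSpace ℝ (Fin n) =>
      p.1.toIsometryEquiv.symm p.2 := by
  refine continuous_iff_continuousAt.2 fun ⟨g₀, y₀⟩ => tendsto_iff_dist_tendsto_zero.2 ?_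
  set x₀ := g₀.toIsometryEquiv.symm y₀ with hx₀
  have hdist (p : RigidMotion n × EuclideanSpace ℝ (Fin n)) :
      dist (p.1.toIsometryEquiv.symm p.2) x₀ = dist p.2 (p.1.toIsometryEquiv x₀) := by
    rw [← p.1.toIsometryEquiv.dist_eq, p.1.toIsometryEquiv.apply_symm_apply]
  have hcont : Continuous fun p : RigidMotion n × EuclideanSpace ℝ (Fin n) =>
      dist p.2 (p.1.toIsometryEquiv x₀) :=
    continuous_snd.dist ((continuous_apply x₀).comp continuous_fst)
  have hzero : dist y₀ (g₀.toIsometryEquiv x₀) = 0 := by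
    rw [hx₀, g₀.toIsometryEquiv.apply_symm_apply, dist_self]
  exact (hcont.tendsto' (g₀, y₀) 0 hzero).congr fun p => (hdist p).symm

lemma isCompact_setOf_apply_mem (x : EuclideanSpace ℝ (Fin n)) {C : Set (EuclideanSpace ℝ (Fin n))}
    (hC : IsCompact C) : IsCompact {g : RigidMotion n | g.toIsometryEquiv x ∈ C} := by
  let translateBack (p : RigidMotion n) : RigidMotion n := (p.1, p.2 - toIsometryEquiv (p.1, 0) x)
  have hcont : Continuous translateBack := by
    simp only [translateBack, toIsometryEquiv_apply]
    fun_prop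
  refine ((isCompact_univ.prod hC).image hcont).of_isClosed_subset
    (hC.isClosed.preimage (continuous_apply x)) fun g hg => ?_
  refine ⟨(g.1, g.toIsometryEquiv x), ⟨mem_univ _, hg⟩, ?_⟩
  simp [translateBack, toIsometryEquiv_apply]

lemma measurePreserving_toIsometryEquiv (g : RigidMotion n) :
    MeasurePreserving g.toIsometryEquiv :=
  (measurePreserving_add_left volume g.2).comp (LinearIsometryEquiv.measurePreserving _)

lemma volume_image (g : RigidMotion n) (s : Set (EuclideanSpace ℝ (Fin n))) :
    volume (g.toIsometryEquiv '' s) = volume s := by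
  rw [← g.measurePreserving_toIsometryEquiv.measure_preimage_emb
    g.toIsometryEquiv.toHomeomorph.measurableEmbedding,
    preimage_image_eq _ g.toIsometryEquiv.injective]

end RigidMotion

section Compactness

variable {n : ℕ} {ι : Type*} {A : ι → Set (EuclideanSpace ℝ (Fin n))}
  {C : Set (EuclideanSpace ℝ (Fin n))}

/-- The packings of `A` into `C`, as a subset of the space of families of rigid motions. -/
def packings (A : ι → Set (EuclideanSpace ℝ (Fin n))) (C : Set (EuclideanSpace ℝ (Fin n))) :
    Set (ι → RigidMotion n) :=
  {σ | IsPacking A (fun i => (σ i).1) (fun i => (σ i).2) C}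

lemma packsInto_iff_nonempty_packings : PacksInto A C ↔ (packings A C).Nonempty :=
  ⟨fun ⟨θ, ξ, h⟩ => ⟨fun i => (⟨θ i, h.1 i⟩, ξ i), h⟩, fun ⟨_, h⟩ => ⟨_, _, h⟩⟩

-- As `interior t` is open, the right-hand side is a closed condition on the pair `(g, g')`.
lemma RigidMotion.interior_image_inter_eq_empty_iff (g g' : RigidMotion n)
    (s t : Set (EuclideanSpace ℝ (Fin n))) :
    interior (g.toIsometryEquiv '' s) ∩ interior (g'.toIsometryEquiv '' t) = ∅ ↔
      MapsTo (fun x => g'.toIsometryEquiv.symm (g.toIsometryEquiv x)) (interior s)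
        (interior t)ᶜ := by
  have himage (e : RigidMotion n) (u : Set (EuclideanSpace ℝ (Fin n))) :
      interior (e.toIsometryEquiv '' u) = e.toIsometryEquiv '' interior u :=
    (e.toIsometryEquiv.toHomeomorph.image_interior u).symm
  rw [himage, himage, ← disjoint_iff_inter_eq_empty, disjoint_left, forall_mem_image,
    ← g'.toIsometryEquiv.preimage_symm]
  rfl

lemma mem_packings_iff {σ : ι → RigidMotion n} :
    σ ∈ packings A C ↔ (∀ i, MapsTo (σ i).toIsometryEquiv (A i) C) ∧
      Pairwise fun i j => MapsTo (fun x => (σ j).toIsometryEquiv.symm ((σ i).toIsometryEquiv x))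
        (interior (A i)) (interior (A j))ᶜ := by
  refine (and_iff_right fun i => (σ i).1.2).trans (and_congr ?_ ?_)
  · exact forall_congr' fun i => mapsTo_iff_image_subset.symm
  · exact forall₃_congr fun i j _ =>
      RigidMotion.interior_image_inter_eq_empty_iff (σ i) (σ j) (A i) (A j)

lemma isClosed_packings (hC : IsClosed C) : IsClosed (packings A C) := by
  have happly (i : ι) (x : EuclideanSpace ℝ (Fin n)) :
      Continuous fun σ : ι → RigidMotion n => (σ i).toIsometryEquiv x :=
    (RigidMotion.continuous_apply x).comp (continuous_apply i)
  have hpull (i j : ι) (x : EuclideanSpace ℝ (Fin n)) :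
      Continuous fun σ : ι → RigidMotion n =>
        (σ j).toIsometryEquiv.symm ((σ i).toIsometryEquiv x) :=
    RigidMotion.continuous_symm_apply.comp₂ (continuous_apply j) (happly i x)
  have hset : packings A C =
      (⋂ i, {σ | MapsTo (σ i).toIsometryEquiv (A i) C}) ∩
        ⋂ (i) (j) (_ : i ≠ j), {σ | MapsTo
          (fun x => (σ j).toIsometryEquiv.symm ((σ i).toIsometryEquiv x))
          (interior (A i)) (interior (A j))ᶜ} := by
    ext σ
    simp only [mem_packings_iff, Pairwise, mem_inter_iff, mem_iInter, mem_ofPred_eq]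
  rw [hset]
  exact (isClosed_iInter fun i => hC.setOfPred_mapsTo fun x _ => happly i x).inter <|
    isClosed_iInter fun i => isClosed_iInter fun j => isClosed_iInter fun _ =>
      isOpen_interior.isClosed_compl.setOfPred_mapsTo fun x _ => hpull i j x

lemma isCompact_packings (hA : ∀ i, (A i).Nonempty) (hC : IsCompact C) :
    IsCompact (packings A C) := by
  choose x hx using hA
  exact (isCompact_univ_pi fun i =>
    RigidMotion.isCompact_setOf_apply_mem (x i) hC).of_isClosed_subset
    (isClosed_packings hC.isClosed) fun σ hσ i _ => (mem_packings_iff.1 hσ).1 i (hx i)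

lemma packings_iInter {κ : Type*} [Nonempty κ] (C : κ → Set (EuclideanSpace ℝ (Fin n))) :
    packings A (⋂ k, C k) = ⋂ k, packings A (C k) := by
  ext σ
  simp only [mem_iInter, mem_packings_iff, mapsTo_iInter, forall_and, forall_const]
  exact and_congr_left fun _ => forall_comm

lemma packings_mono : Monotone (packings A) := fun _ _ hCD _ hσ =>
  ⟨hσ.1, fun i => (hσ.2.1 i).trans hCD, hσ.2.2⟩

theorem PacksInto.iInter {κ : Type*} [Nonempty κ] {C : κ → Set (EuclideanSpace ℝ (Fin n))}
    (hA : ∀ i, (A i).Nonempty) (hC : ∀ k, IsCompact (C k)) (hdir : Directed (· ⊇ ·) C)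
    (h : ∀ k, PacksInto A (C k)) : PacksInto A (⋂ k, C k) := by
  rw [packsInto_iff_nonempty_packings, packings_iInter]
  exact IsCompact.nonempty_iInter_of_directed_nonempty_isCompact_isClosed _
    (hdir.mono_comp (· ⊇ ·) (g := packings A) fun _ _ hDC => packings_mono hDC)
    (fun k => packsInto_iff_nonempty_packings.1 (h k)) (fun k => isCompact_packings hA (hC k))
    fun k => isClosed_packings (hC k).isClosed

end Compactness

lemma aedisjoint_of_disjoint_interior {X : Type*} [TopologicalSpace X] [MeasurableSpace X]
    {μ : Measure X} {s t : Set X} (hs : μ (frontier s) = 0) (ht : μ (frontier t) = 0)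
    (h : Disjoint (interior s) (interior t)) : AEDisjoint μ s t :=
  h.aedisjoint.congr (interior_ae_eq_of_null_frontier hs).symm
    (interior_ae_eq_of_null_frontier ht).symm

lemma RigidMotion.volume_frontier_image {n : ℕ} (g : RigidMotion n)
    (s : Set (EuclideanSpace ℝ (Fin n))) :
    volume (frontier (g.toIsometryEquiv '' s)) = volume (frontier s) := by
  rw [← g.volume_image (frontier s)]
  exact congrArg volume (g.toIsometryEquiv.toHomeomorph.image_frontier s).symm

theorem IsPacking.volume_diff_iUnion {n : ℕ} {ι : Type*} [Countable ι]
    {A : ι → Set (EuclideanSpace ℝ (Fin n))} {C : Set (EuclideanSpace ℝ (Fin n))}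
    {θ : ι → Matrix (Fin n) (Fin n) ℝ} {ξ : ι → EuclideanSpace ℝ (Fin n)}
    (h : IsPacking A θ ξ C) (hA : ∀ i, volume (frontier (A i)) = 0)
    (hfin : ∑' i, volume (A i) ≠ ⊤) :
    volume (C \ ⋃ i, rmApply (θ i) (ξ i) '' A i) = volume C - ∑' i, volume (A i) := by
  obtain ⟨hθ, hsub, hdisj⟩ := h
  let σ (i : ι) : RigidMotion n := (⟨θ i, hθ i⟩, ξ i)
  have hfrontier (i : ι) : volume (frontier (rmApply (θ i) (ξ i) '' A i)) = 0 :=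
    ((σ i).volume_frontier_image (A i)).trans (hA i)
  have hmeas (i : ι) : NullMeasurableSet (rmApply (θ i) (ξ i) '' A i) :=
    nullMeasurableSet_of_null_frontier (hfrontier i)
  have hunion : volume (⋃ i, rmApply (θ i) (ξ i) '' A i) = ∑' i, volume (A i) := by
    rw [measure_iUnion₀ (fun i j hij => aedisjoint_of_disjoint_interior (hfrontier i) (hfrontier j)
      (disjoint_iff_inter_eq_empty.2 (hdisj hij))) hmeas]
    exact tsum_congr fun i => (σ i).volume_image (A i)
  rw [measure_sdiff (iUnion_subset hsub) (.iUnion hmeas) (hunion.trans_ne hfin), hunion]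

section Rectangles

lemma rect_eq_preimage_Icc (w h : ℝ) : rect w h = WithLp.ofLp ⁻¹' Icc 0 ![w, h] := by
  ext x
  simp only [rect, mem_preimage, mem_Icc, Pi.le_def, Fin.forall_fin_two]
  exact and_and_and_comm

lemma isCompact_rect (w h : ℝ) : IsCompact (rect w h) := by
  rw [rect_eq_preimage_Icc]
  exact (PiLp.homeomorph 2 fun _ : Fin 2 => ℝ).isCompact_preimage.2 isCompact_Icc

lemma convex_rect (w h : ℝ) : Convex ℝ (rect w h) := by
  rw [rect_eq_preimage_Icc]
  exact (convex_Icc _ _).linear_preimage (WithLp.linearEquiv 2 ℝ (Fin 2 → ℝ)).toLinearMap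

lemma volume_rect {w : ℝ} (hw : 0 ≤ w) (h : ℝ) : volume (rect w h) = ENNReal.ofReal (w * h) := by
  rw [rect_eq_preimage_Icc, (PiLp.volume_preserving_ofLp (Fin 2)).measure_preimage
    measurableSet_Icc.nullMeasurableSet, Real.volume_Icc_pi]
  simp [ENNReal.ofReal_mul hw]

lemma nonempty_rect {w h : ℝ} (hw : 0 ≤ w) (hh : 0 ≤ h) : (rect w h).Nonempty :=
  ⟨0, left_mem_Icc.2 hw, left_mem_Icc.2 hh⟩

lemma rect_mono {w w' h h' : ℝ} (hw : w ≤ w') (hh : h ≤ h') : rect w h ⊆ rect w' h' :=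
  fun _ hx => ⟨Icc_subset_Icc_right hw hx.1, Icc_subset_Icc_right hh hx.2⟩

lemma iInter_Ioi_rect_self (a : ℝ) : ⋂ s : Ioi a, rect s s = rect a a := by
  refine Subset.antisymm (fun x hx => ?_) (subset_iInter fun s => rect_mono s.2.le s.2.le)
  simp only [mem_iInter, Subtype.forall, mem_Ioi] at hx
  obtain ⟨b, hab⟩ := exists_gt a
  exact ⟨⟨(hx b hab).1.1, le_of_forall_gt_imp_ge_of_dense fun s hs => (hx s hs).1.2⟩,
    ⟨(hx b hab).2.1, le_of_forall_gt_imp_ge_of_dense fun s hs => (hx s hs).2.2⟩⟩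

end Rectangles

lemma hasSum_sub_of_antitone_of_tendsto {f : ℕ → ℝ} {a : ℝ} (hf : Antitone f)
    (ha : Tendsto f atTop (𝓝 a)) : HasSum (fun i => f i - f (i + 1)) (f 0 - a) := by
  rw [hasSum_iff_tendsto_nat_of_nonneg fun i => sub_nonneg.2 (hf i.le_succ)]
  simpa only [Finset.sum_range_sub'] using ha.const_sub (f 0)

lemma volume_moserRects (i : ℕ) :
    volume (moserRects i) = ENNReal.ofReal (1 / ((i : ℝ) + 1) - 1 / (((i + 1 : ℕ) : ℝ) + 1)) := by
  rw [moserRects, volume_rect (by positivity)]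
  congr 1
  push_cast
  field_simp
  ring

lemma tsum_volume_moserRects : ∑' i, volume (moserRects i) = 1 := by
  have hanti : Antitone fun i : ℕ => 1 / ((i : ℝ) + 1) := fun i j hij => Nat.one_div_le_one_div hij
  have hsum := hasSum_sub_of_antitone_of_tendsto hanti tendsto_one_div_add_atTop_nhds_zero_nat
  simp_rw [volume_moserRects]
  rw [← ENNReal.ofReal_tsum_of_nonneg (fun i => sub_nonneg.2 (hanti i.le_succ)) hsum.summable,
    hsum.tsum_eq]
  simp

lemma packsInto_moserRects_unitSquare (h : ∀ s : ℝ, 1 < s → PacksInto moserRects (rect s s)) :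
    PacksInto moserRects (rect 1 1) := by
  rw [← iInter_Ioi_rect_self]
  refine PacksInto.iInter (fun i => nonempty_rect (by positivity) (by positivity))
    (fun s => isCompact_rect _ _) ?_ fun s => h s s.2
  exact Monotone.directed_ge fun s t hst => rect_mono hst hst

/-- **Corollary 1.** If for every `ε > 0` the rectangles of dimensions `1 × (1/2)`,
`(1/2) × (1/3)`, … can be packed into a square of area `1 + ε`, then they tile a square
of area `1`: there is a packing into the unit square whose complement in that square has
Lebesgue measure zero. -/
theorem moser_rectangles_tile_square
    (h : ∀ ε : ℝ, 0 < ε → ∃ s : ℝ, 0 ≤ s ∧ s ^ 2 = 1 + ε ∧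
      PacksInto moserRects (rect s s)) :
    ∃ (θ : ℕ → Matrix (Fin 2) (Fin 2) ℝ) (ξ : ℕ → EuclideanSpace ℝ (Fin 2)),
      IsPacking moserRects θ ξ (rect 1 1) ∧
      MeasureTheory.volume
        (rect 1 1 \ ⋃ i, rmApply (θ i) (ξ i) '' moserRects i) = 0 := by
  have hsquare (s : ℝ) (hs : 1 < s) : PacksInto moserRects (rect s s) := by
    obtain ⟨t, ht, hts, hpack⟩ := h (s ^ 2 - 1) (sub_pos.2 (one_lt_pow₀ hs two_ne_zero))
    rw [add_sub_cancel, sq_eq_sq₀ ht (by positivity)] at hts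
    exact hts ▸ hpack
  obtain ⟨θ, ξ, hpack⟩ := packsInto_moserRects_unitSquare hsquare
  refine ⟨θ, ξ, hpack, ?_⟩
  rw [hpack.volume_diff_iUnion (fun i => (convex_rect _ _).addHaar_frontier volume)
    (by simp [tsum_volume_moserRects]), tsum_volume_moserRects, volume_rect zero_le_one]
  simp
end
end

section
/- Let 𝒜 = {A_1, A_2, …} and 𝒞 = {C_1, C_2, …} be collections of subsets of ℝⁿ. For each k ≥ 1 define D_k = ⋃_{j≥k} C_j, and suppose that D_1 is bounded. If for every j ≥ 1 there exists a packing of 𝒜 into C_j, then there exists a packing of 𝒜 into the set ⋂_{k≥1} closure(D_k). -/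
/-!
Rigid motions that send a given point into a given compact set form a compact set of pairs
`(θ, ξ)`, so packings into sets that stay bounded along an ultrafilter converge, for each nonempty
`A i`, along it. The ultrafilter handles all indices at once, whatever the cardinality of the
family. An interior point of a limit set is an interior point of almost all the approximating
sets, because isometries preserve the radius of the surrounding ball; hence interiors that overlap
in the limit would already overlap before it.
-/

open Pointwise

noncomputable section

open Filter Topology Metric

lemma eventually_mem_interior_image {J X Y : Type*} [PseudoMetricSpace X] [PseudoMetricSpace Y]
    {l : Filter J} {e : J → X ≃ᵢ Y} {f : X → Y} (hcont : Continuous f) (hinj : f.Injective)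
    (hlim : ∀ x, Tendsto (fun j => e j x) l (𝓝 (f x))) {A : Set X} {y : Y}
    (hy : y ∈ interior (f '' A)) :
    ∀ᶠ j in l, y ∈ interior (e j '' A) := by
  obtain ⟨a, -, rfl⟩ := interior_subset hy
  have ha : a ∈ interior A := by
    simpa only [hinj.preimage_image] using preimage_interior_subset_interior_preimage hcont hy
  obtain ⟨r, hr, hball⟩ := Metric.mem_nhds_iff.mp (mem_interior_iff_mem_nhds.mp ha)
  filter_upwards [hlim a (ball_mem_nhds _ hr)] with j hj
  have hsub : ball (e j a) r ⊆ e j '' A :=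
    (e j).image_ball a r ▸ Set.image_mono hball
  exact interior_maximal hsub isOpen_ball (mem_ball_comm.mp hj)

lemma isCompact_unitaryGroup (m 𝕜 : Type*) [Fintype m] [DecidableEq m] [RCLike 𝕜] :
    IsCompact (Matrix.unitaryGroup m 𝕜 : Set (Matrix m m 𝕜)) := by
  have hbox : IsCompact (Set.univ.pi fun _ : m => Set.univ.pi fun _ : m => closedBall (0 : 𝕜) 1) :=
    isCompact_univ_pi fun _ => isCompact_univ_pi fun _ => isCompact_closedBall 0 1
  refine hbox.of_isClosed_subset (isClosed_unitary (R := Matrix m m 𝕜)) fun U hU i _ j _ => ?_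
  exact mem_closedBall_zero_iff.mpr (entry_norm_bound_of_unitary hU i j)

section RigidMotion

variable {n : ℕ}

/-- The rigid motion `rmApply θ ξ` with `θ` orthogonal, as a self-isometry of `ℝⁿ`. -/
def rmIsometryEquiv (θ : Matrix.orthogonalGroup (Fin n) ℝ) (ξ : EuclideanSpace ℝ (Fin n)) :
    EuclideanSpace ℝ (Fin n) ≃ᵢ EuclideanSpace ℝ (Fin n) :=
  (Unitary.linearIsometryEquiv ⟨Matrix.toEuclideanCLM (𝕜 := ℝ) θ.1,
    Unitary.map_mem Matrix.toEuclideanCLM θ.2⟩).toIsometryEquiv.trans (IsometryEquiv.addLeft ξ)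

lemma coe_rmIsometryEquiv (θ : Matrix.orthogonalGroup (Fin n) ℝ)
    (ξ : EuclideanSpace ℝ (Fin n)) : ⇑(rmIsometryEquiv θ ξ) = rmApply θ ξ :=
  rfl

lemma continuous_rmApply (x : EuclideanSpace ℝ (Fin n)) :
    Continuous fun p : Matrix (Fin n) (Fin n) ℝ × EuclideanSpace ℝ (Fin n) =>
      rmApply p.1 p.2 x := by
  unfold rmApply
  fun_prop

lemma isCompact_rigidMotions_mem (a : EuclideanSpace ℝ (Fin n))
    {S : Set (EuclideanSpace ℝ (Fin n))} (hS : IsCompact S) :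
    IsCompact {p : Matrix (Fin n) (Fin n) ℝ × EuclideanSpace ℝ (Fin n) |
      p.1 ∈ Matrix.orthogonalGroup (Fin n) ℝ ∧ rmApply p.1 p.2 a ∈ S} := by
  -- `(θ, ξ)` is determined by `θ` and the image `ξ + θa` of `a`.
  have hcont : Continuous fun q : Matrix (Fin n) (Fin n) ℝ × EuclideanSpace ℝ (Fin n) =>
      (q.1, q.2 - rmApply q.1 0 a) := by
    unfold rmApply
    fun_prop
  convert ((isCompact_unitaryGroup (Fin n) ℝ).prod hS).image hcont using 1
  refine Set.Subset.antisymm ?_ ?_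
  · rintro ⟨θ, ξ⟩ ⟨hθ, hξ⟩
    exact ⟨(θ, rmApply θ ξ a), ⟨hθ, hξ⟩, by simp [rmApply]⟩
  · rintro _ ⟨⟨θ, y⟩, ⟨hθ, hy⟩, rfl⟩
    have hmap : rmApply θ (y - rmApply θ 0 a) a = y := by simp [rmApply]
    exact ⟨hθ, hmap.symm ▸ hy⟩

end RigidMotion

section Packing

variable {n : ℕ} {ι J : Type*} {A : ι → Set (EuclideanSpace ℝ (Fin n))}
  {C : J → Set (EuclideanSpace ℝ (Fin n))}
  {θ : J → ι → Matrix (Fin n) (Fin n) ℝ} {ξ : J → ι → EuclideanSpace ℝ (Fin n)}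

lemma PacksInto.mono {S T : Set (EuclideanSpace ℝ (Fin n))} (h : PacksInto A S) (hST : S ⊆ T) :
    PacksInto A T :=
  let ⟨θ, ξ, hθ, hsub, hdisj⟩ := h
  ⟨θ, ξ, hθ, fun i => (hsub i).trans hST, hdisj⟩

lemma IsPacking.of_tendsto {l : Filter J} [l.NeBot] {θ₀ : ι → Matrix (Fin n) (Fin n) ℝ}
    {ξ₀ : ι → EuclideanSpace ℝ (Fin n)} (h : ∀ j, IsPacking A (θ j) (ξ j) (C j))
    (hθ₀ : ∀ i, θ₀ i ∈ Matrix.orthogonalGroup (Fin n) ℝ)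
    (hlim : ∀ i, (A i).Nonempty → Tendsto (fun j => (θ j i, ξ j i)) l (𝓝 (θ₀ i, ξ₀ i))) :
    IsPacking A θ₀ ξ₀ (⋂ s ∈ l, closure (⋃ j ∈ s, C j)) := by
  have hlim_apply (i) (hA : (A i).Nonempty) (x) :
      Tendsto (fun j => rmApply (θ j i) (ξ j i) x) l (𝓝 (rmApply (θ₀ i) (ξ₀ i) x)) :=
    ((continuous_rmApply x).tendsto _).comp (hlim i hA)
  have hinterior (i y) (hy : y ∈ interior (rmApply (θ₀ i) (ξ₀ i) '' A i)) :
      ∀ᶠ j in l, y ∈ interior (rmApply (θ j i) (ξ j i) '' A i) := by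
    have hA : (A i).Nonempty := Set.image_nonempty.mp ⟨y, interior_subset hy⟩
    let σ₀ := rmIsometryEquiv ⟨θ₀ i, hθ₀ i⟩ (ξ₀ i)
    let σ (j : J) := rmIsometryEquiv ⟨θ j i, (h j).1 i⟩ (ξ j i)
    have hσ : ∀ᶠ j in l, y ∈ interior (σ j '' A i) :=
      eventually_mem_interior_image σ₀.continuous σ₀.injective (hlim_apply i hA) hy
    simpa only [σ, coe_rmIsometryEquiv] using hσ
  refine ⟨hθ₀, ?_, fun i i' hii' => Set.disjoint_iff_inter_eq_empty.mp ?_⟩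
  · rintro i _ ⟨x, hx, rfl⟩
    refine Set.mem_iInter₂.mpr fun s hs => mem_closure_of_tendsto (hlim_apply i ⟨x, hx⟩ x) ?_
    filter_upwards [hs] with j hj
    exact Set.mem_biUnion hj ((h j).2.1 i (Set.mem_image_of_mem _ hx))
  · refine Set.disjoint_left.mpr fun y hy hy' => ?_
    obtain ⟨j, hj, hj'⟩ := ((hinterior i y hy).and (hinterior i' y hy')).exists
    exact ((h j).2.2 hii').le ⟨hj, hj'⟩

lemma IsPacking.exists_tendsto (U : Ultrafilter J) {B : Set (EuclideanSpace ℝ (Fin n))}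
    (hB : Bornology.IsBounded B) (h : ∀ j, IsPacking A (θ j) (ξ j) B) (i : ι) :
    ∃ p : Matrix (Fin n) (Fin n) ℝ × EuclideanSpace ℝ (Fin n),
      p.1 ∈ Matrix.orthogonalGroup (Fin n) ℝ ∧
      ((A i).Nonempty → Tendsto (fun j => (θ j i, ξ j i)) U (𝓝 p)) := by
  rcases (A i).eq_empty_or_nonempty with hA | ⟨a, ha⟩
  · exact ⟨(1, 0), one_mem _, fun hne => absurd hA hne.ne_empty⟩
  · have hmem (j) : rmApply (θ j i) (ξ j i) a ∈ closure B :=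
      subset_closure ((h j).2.1 i (Set.mem_image_of_mem _ ha))
    have hcompact := isCompact_rigidMotions_mem a hB.isCompact_closure
    obtain ⟨p, hp, hlim⟩ := hcompact.ultrafilter_le_nhds'
      (U.map fun j => (θ j i, ξ j i)) (mem_map.mpr (univ_mem' fun j => ⟨(h j).1 i, hmem j⟩))
    exact ⟨p, hp.1, fun _ => hlim⟩

lemma packsInto_iInter_closure_of_forall {l : Filter J} [l.NeBot]
    {B : Set (EuclideanSpace ℝ (Fin n))} (hB : Bornology.IsBounded B) (hCB : ∀ j, C j ⊆ B)
    (h : ∀ j, PacksInto A (C j)) :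
    PacksInto A (⋂ s ∈ l, closure (⋃ j ∈ s, C j)) := by
  choose θ ξ hpack using h
  have hpackB (j) : IsPacking A (θ j) (ξ j) B :=
    ⟨(hpack j).1, fun i => ((hpack j).2.1 i).trans (hCB j), (hpack j).2.2⟩
  choose p hp hlim using IsPacking.exists_tendsto (Ultrafilter.of l) hB hpackB
  have hpacksU : PacksInto A (⋂ s ∈ Ultrafilter.of l, closure (⋃ j ∈ s, C j)) :=
    ⟨_, _, IsPacking.of_tendsto hpack hp hlim⟩
  exact hpacksU.mono (Set.biInter_subset_biInter_left fun s hs => Ultrafilter.of_le l hs)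

end Packing

theorem packing_into_limsup_general {n : ℕ} {ι J : Type*}
    (A : ι → Set (EuclideanSpace ℝ (Fin n))) (C : J → Set (EuclideanSpace ℝ (Fin n)))
    (l : Filter J) {B : Set (EuclideanSpace ℝ (Fin n))} (hB : Bornology.IsBounded B)
    (h : ∃ᶠ j in l, C j ⊆ B ∧ PacksInto A (C j)) :
    PacksInto A (⋂ s ∈ l, closure (⋃ j ∈ s, C j)) := by
  let val : {j // C j ⊆ B ∧ PacksInto A (C j)} → J := Subtype.val
  have : (l.comap val).NeBot :=
    comap_neBot_iff_frequently.mpr (h.mono fun j hj => ⟨⟨j, hj⟩, rfl⟩)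
  refine (packsInto_iInter_closure_of_forall (l := l.comap val) (C := C ∘ val) hB
    (fun j => j.2.1) (fun j => j.2.2)).mono ?_
  refine Set.subset_iInter₂ fun s hs => ?_
  refine (Set.biInter_subset_of_mem (preimage_mem_comap hs)).trans (closure_mono ?_)
  exact Set.iUnion₂_subset fun j hj => Set.subset_biUnion_of_mem (u := C) hj

/-- **Lemma 1.** Let `A` and `C` be collections of subsets of `ℝⁿ` (with `C` a sequence),
let `D k = ⋃_{j ≥ k} C j`, and suppose `D 0` (hence every `D k`) is bounded. If `A` can
be packed into every `C j`, then `A` can be packed into `⋂ k, closure (D k)`. -/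
theorem packing_into_limsup {n : ℕ} {ι : Type*}
    (A : ι → Set (EuclideanSpace ℝ (Fin n)))
    (C : ℕ → Set (EuclideanSpace ℝ (Fin n)))
    (hbd : Bornology.IsBounded (⋃ j, C j))
    (h : ∀ j, PacksInto A (C j)) :
    PacksInto A (⋂ k, closure (⋃ j, ⋃ (_ : k ≤ j), C j)) := by
  have hC (j) : C j ⊆ ⋃ j, C j := Set.subset_iUnion C j
  exact (packing_into_limsup_general A C atTop hbd (.of_forall fun j => ⟨hC j, h j⟩)).mono
    (Set.subset_iInter fun k => Set.biInter_subset_of_mem (Ici_mem_atTop k))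
end
end
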